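/- (Sparse strong-convexity penalized rate.) Let L_n be a twice-differentiable convex function on ℝ^r such that ν'∇²L_n(ψ)ν ≥ λ_n‖ν‖₂² for all ν in the cone C(T;3) and all ψ, where T = supp(ψ*) with |T| = s. Suppose ψ̂ minimizes L_n(ψ) + κ‖ψ‖₁, ‖∇L_n(ψ*)‖_∞ ≤ κ/2, and ν = ψ̂ − ψ* ∈ C(T;3). Then ‖ν‖₂ ≤ 3√s κ/λ_n and ‖ν‖₁ ≤ 12 s κ/λ_n. -/

import Mathlib

open Finset

/-!
Comparing the penalized objective at `ψ̂` and `ψ*` bounds the excess loss by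
`κ (‖ν_T‖₁ - ‖ν_{Tᶜ}‖₁)`, while restricted strong convexity and the Hölder inequality bound it
from below by `-(κ/2) ‖ν‖₁ + (λ/2) ‖ν‖₂²`. The off-support mass `‖ν_{Tᶜ}‖₁` enters the combined
inequality with a favourable sign, leaving `(λ/2) ‖ν‖₂² ≤ (3κ/2) ‖ν_T‖₁ ≤ (3κ/2) √s ‖ν‖₂`.
Dividing by `‖ν‖₂` gives the `ℓ²` rate, and the cone condition transfers it to `ℓ¹`.
-/

lemma le_div_of_mul_sq_le_mul {K : Type*} [Field K] [LinearOrder K] [IsStrictOrderedRing K]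
    {m a q : K} (hm : 0 < m) (ha : 0 ≤ a) (h : m * q ^ 2 ≤ a * q) : q ≤ a / m := by
  rcases le_or_gt q 0 with hq | hq
  · exact hq.trans (div_nonneg ha hm.le)
  · rw [le_div_iff₀ hm]
    refine le_of_mul_le_mul_right ?_ hq
    calc q * m * q = m * q ^ 2 := by ring
      _ ≤ a * q := h

section Sums

variable {ι : Type*}

lemma abs_sum_mul_le_mul_sum_abs {R : Type*} [Ring R] [LinearOrder R] [IsOrderedRing R]
    {S : Finset ι} {g x : ι → R} {γ : R} (hg : ∀ i ∈ S, |g i| ≤ γ) :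
    |∑ i ∈ S, g i * x i| ≤ γ * ∑ i ∈ S, |x i| := by
  calc |∑ i ∈ S, g i * x i| ≤ ∑ i ∈ S, |g i * x i| := abs_sum_le_sum_abs _ _
    _ ≤ ∑ i ∈ S, γ * |x i| := by
      gcongr with i hi
      rw [abs_mul]
      gcongr
      exact hg i hi
    _ = γ * ∑ i ∈ S, |x i| := (mul_sum _ _ _).symm

lemma sum_abs_le_sqrt_card_mul_sqrt_sum_sq {S T : Finset ι} (hTS : T ⊆ S) (x : ι → ℝ) :
    ∑ i ∈ T, |x i| ≤ √(#T) * √(∑ i ∈ S, x i ^ 2) := by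
  rw [← Real.sqrt_mul (Nat.cast_nonneg _)]
  apply Real.le_sqrt_of_sq_le
  calc (∑ i ∈ T, |x i|) ^ 2 ≤ #T * ∑ i ∈ T, |x i| ^ 2 := sq_sum_le_card_mul_sum_sq
    _ = #T * ∑ i ∈ T, x i ^ 2 := by simp only [sq_abs]
    _ ≤ #T * ∑ i ∈ S, x i ^ 2 := by gcongr

lemma sum_abs_sub_sum_abs_le_of_eq_zero_off [Fintype ι] [DecidableEq ι] {G : Type*}
    [AddCommGroup G] [LinearOrder G] [IsOrderedAddMonoid G]
    {T : Finset ι} {x : ι → G} (hx : ∀ i ∉ T, x i = 0) (y : ι → G) :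
    ∑ i, |x i| - ∑ i, |y i| ≤ ∑ i ∈ T, |y i - x i| - ∑ i ∈ Tᶜ, |y i - x i| := by
  have on_support : ∑ i ∈ T, (|x i| - |y i|) ≤ ∑ i ∈ T, |y i - x i| := by
    gcongr with i
    rw [abs_sub_comm]
    exact abs_sub_abs_le_abs_sub (x i) (y i)
  have off_support : ∑ i ∈ Tᶜ, (|x i| - |y i|) = -∑ i ∈ Tᶜ, |y i - x i| := by
    rw [← sum_neg_distrib]
    refine sum_congr rfl fun i hi => ?_
    rw [hx i (mem_compl.mp hi), abs_zero, zero_sub, sub_zero]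
  calc ∑ i, |x i| - ∑ i, |y i|
      = ∑ i ∈ T, (|x i| - |y i|) + ∑ i ∈ Tᶜ, (|x i| - |y i|) := by
        rw [← sum_sub_distrib, sum_add_sum_compl]
    _ ≤ ∑ i ∈ T, |y i - x i| + -∑ i ∈ Tᶜ, |y i - x i| := add_le_add on_support off_support.le
    _ = ∑ i ∈ T, |y i - x i| - ∑ i ∈ Tᶜ, |y i - x i| := (sub_eq_add_neg _ _).symm

end Sums

section Rates

variable {ι : Type*} [Fintype ι]

/-- The cone `C(T; c)` of directions whose `ℓ¹` mass off `T` is at most `c` times that on `T`. -/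
def l1Cone [DecidableEq ι] (T : Finset ι) (c : ℝ) : Set (ι → ℝ) :=
  {ν | ∑ i ∈ Tᶜ, |ν i| ≤ c * ∑ i ∈ T, |ν i|}

/-- Strong convexity of `L` at the single point `ψ`, with modulus `m` and only along directions
in `C`. The vector `g` stands for the gradient `∇L(ψ)`; no differentiability is built in. -/
def RestrictedStrongConvexAt (L : (ι → ℝ) → ℝ) (g : ι → ℝ) (m : ℝ) (C : Set (ι → ℝ))
    (ψ : ι → ℝ) : Prop :=
  ∀ ν ∈ C, L ψ + ∑ i, g i * ν i + m / 2 * ∑ i, ν i ^ 2 ≤ L (ψ + ν)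

variable {L : (ι → ℝ) → ℝ} {g ψ ψ' : ι → ℝ} {C : Set (ι → ℝ)}
  {T : Finset ι} {κ γ m c : ℝ}

lemma sum_abs_le_of_mem_l1Cone [DecidableEq ι] {ν : ι → ℝ} (hν : ν ∈ l1Cone T c) :
    ∑ i, |ν i| ≤ (1 + c) * ∑ i ∈ T, |ν i| := by
  calc ∑ i, |ν i| = ∑ i ∈ T, |ν i| + ∑ i ∈ Tᶜ, |ν i| := (sum_add_sum_compl T _).symm
    _ ≤ ∑ i ∈ T, |ν i| + c * ∑ i ∈ T, |ν i| := by gcongr; exact hν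
    _ = (1 + c) * ∑ i ∈ T, |ν i| := by ring

namespace RestrictedStrongConvexAt

lemma half_mul_sum_sq_sub_le (hL : RestrictedStrongConvexAt L g m C ψ)
    (hγ : 0 ≤ γ) (hγκ : γ ≤ κ) (hg : ∀ i, |g i| ≤ γ) (hψ : ∀ i ∉ T, ψ i = 0)
    (hobj : L ψ' + κ * ∑ i, |ψ' i| ≤ L ψ + κ * ∑ i, |ψ i|) (hmem : ψ' - ψ ∈ C) :
    m / 2 * ∑ i, (ψ' i - ψ i) ^ 2 ≤ (κ + γ) * ∑ i ∈ T, |ψ' i - ψ i| := by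
  classical
  have convexity : L ψ + ∑ i, g i * (ψ' i - ψ i) + m / 2 * ∑ i, (ψ' i - ψ i) ^ 2 ≤ L ψ' := by
    simpa only [Pi.sub_apply, add_sub_cancel] using hL _ hmem
  have gradient : -(γ * ∑ i, |ψ' i - ψ i|) ≤ ∑ i, g i * (ψ' i - ψ i) :=
    neg_le_of_abs_le (abs_sum_mul_le_mul_sum_abs fun i _ => hg i)
  have penalty : κ * (∑ i, |ψ i| - ∑ i, |ψ' i|) ≤
      κ * (∑ i ∈ T, |ψ' i - ψ i| - ∑ i ∈ Tᶜ, |ψ' i - ψ i|) :=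
    mul_le_mul_of_nonneg_left (sum_abs_sub_sum_abs_le_of_eq_zero_off hψ ψ') (hγ.trans hγκ)
  have off_support : γ * ∑ i ∈ Tᶜ, |ψ' i - ψ i| ≤ κ * ∑ i ∈ Tᶜ, |ψ' i - ψ i| := by gcongr
  rw [← sum_add_sum_compl T] at gradient
  linarith

lemma sqrt_sum_sq_sub_le (hL : RestrictedStrongConvexAt L g m C ψ) (hm : 0 < m)
    (hγ : 0 ≤ γ) (hγκ : γ ≤ κ) (hg : ∀ i, |g i| ≤ γ) (hψ : ∀ i ∉ T, ψ i = 0)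
    (hobj : L ψ' + κ * ∑ i, |ψ' i| ≤ L ψ + κ * ∑ i, |ψ i|) (hmem : ψ' - ψ ∈ C) :
    √(∑ i, (ψ' i - ψ i) ^ 2) ≤ 2 * (κ + γ) * √(#T) / m := by
  have hκγ : 0 ≤ κ + γ := add_nonneg (hγ.trans hγκ) hγ
  apply le_div_of_mul_sq_le_mul hm (by positivity)
  calc m * √(∑ i, (ψ' i - ψ i) ^ 2) ^ 2
      = 2 * (m / 2 * ∑ i, (ψ' i - ψ i) ^ 2) := by
        rw [Real.sq_sqrt (by positivity)]
        ring
    _ ≤ 2 * ((κ + γ) * ∑ i ∈ T, |ψ' i - ψ i|) := by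
        gcongr 2 * ?_
        exact hL.half_mul_sum_sq_sub_le hγ hγκ hg hψ hobj hmem
    _ ≤ 2 * ((κ + γ) * (√(#T) * √(∑ i, (ψ' i - ψ i) ^ 2))) := by
        gcongr
        exact sum_abs_le_sqrt_card_mul_sqrt_sum_sq (subset_univ T) _
    _ = 2 * (κ + γ) * √(#T) * √(∑ i, (ψ' i - ψ i) ^ 2) := by ring

end RestrictedStrongConvexAt

theorem sparse_penalized_rate_general [DecidableEq ι] (hm : 0 < m) (hγ : 0 ≤ γ) (hγκ : γ ≤ κ)
    (hc : 0 ≤ c) (hψ : ∀ i ∉ T, ψ i = 0) (hL : RestrictedStrongConvexAt L g m (l1Cone T c) ψ)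
    (hobj : L ψ' + κ * ∑ i, |ψ' i| ≤ L ψ + κ * ∑ i, |ψ i|)
    (hg : ∀ i, |g i| ≤ γ) (hcone : ψ' - ψ ∈ l1Cone T c) :
    √(∑ i, (ψ' i - ψ i) ^ 2) ≤ 2 * (κ + γ) * √(#T) / m ∧
      ∑ i, |ψ' i - ψ i| ≤ 2 * (1 + c) * (κ + γ) * #T / m := by
  have l2_rate := hL.sqrt_sum_sq_sub_le hm hγ hγκ hg hψ hobj hcone
  refine ⟨l2_rate, ?_⟩
  calc ∑ i, |ψ' i - ψ i|
      ≤ (1 + c) * ∑ i ∈ T, |ψ' i - ψ i| := sum_abs_le_of_mem_l1Cone hcone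
    _ ≤ (1 + c) * (√(#T) * √(∑ i, (ψ' i - ψ i) ^ 2)) := by
        gcongr
        exact sum_abs_le_sqrt_card_mul_sqrt_sum_sq (subset_univ T) _
    _ ≤ (1 + c) * (√(#T) * (2 * (κ + γ) * √(#T) / m)) := by gcongr
    _ = 2 * (1 + c) * (κ + γ) * √(#T) ^ 2 / m := by ring
    _ = 2 * (1 + c) * (κ + γ) * #T / m := by rw [Real.sq_sqrt (Nat.cast_nonneg _)]

end Rates

/-- Sparse strong-convexity penalized rate.  Let `L_n : ℝ^r → ℝ` be convex with gradient
`g`, and λ_n-strongly convex along the cone `C(T;3) = {ν : ‖ν_{T^c}‖₁ ≤ 3‖ν_T‖₁}` (this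
is the consequence of `ν'∇²L_n(ψ)ν ≥ λ_n‖ν‖₂²` for cone directions, expressed via the
second-order lower bound along such directions).  Let `T = supp(ψ*)` with `|T| = s`.
If `ψ̂` minimizes `L_n(ψ) + κ‖ψ‖₁`, `‖∇L_n(ψ*)‖_∞ ≤ κ/2`, and `ν = ψ̂ − ψ* ∈ C(T;3)`,
then `‖ν‖₂ ≤ 3√s·κ/λ_n` and `‖ν‖₁ ≤ 12·s·κ/λ_n`. -/
theorem sparse_penalized_rate {r : ℕ} (s : ℕ)
    (L : (Fin r → ℝ) → ℝ) (g : (Fin r → ℝ) → Fin r → ℝ)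
    (κ lam : ℝ) (hκ : 0 ≤ κ) (hlam : 0 < lam)
    (T : Finset (Fin r)) (hcard : T.card = s)
    (ψs ψh : Fin r → ℝ)
    (hsupp : ∀ i ∉ T, ψs i = 0)
    -- restricted strong convexity along cone directions:
    (hSC : ∀ ψ ν : Fin r → ℝ, (∑ i ∈ Tᶜ, |ν i| ≤ 3 * ∑ i ∈ T, |ν i|) →
      L ψ + ∑ i, g ψ i * ν i + (lam / 2) * ∑ i, (ν i) ^ 2 ≤ L (ψ + ν))
    -- `ψ̂` minimizes the ℓ₁-penalized loss:
    (hmin : ∀ ψ, L ψh + κ * ∑ i, |ψh i| ≤ L ψ + κ * ∑ i, |ψ i|)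
    -- sup-norm gradient bound `‖∇L_n(ψ*)‖_∞ ≤ κ/2`:
    (hgrad : ∀ i, |g ψs i| ≤ κ / 2)
    -- cone condition on `ν = ψ̂ − ψ*`:
    (hcone : ∑ i ∈ Tᶜ, |ψh i - ψs i| ≤ 3 * ∑ i ∈ T, |ψh i - ψs i|) :
    Real.sqrt (∑ i, (ψh i - ψs i) ^ 2) ≤ 3 * Real.sqrt s * κ / lam ∧
      ∑ i, |ψh i - ψs i| ≤ 12 * s * κ / lam := by
  subst hcard
  obtain ⟨h_l2, h_l1⟩ := sparse_penalized_rate_general hlam (div_nonneg hκ zero_le_two)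
    (half_le_self hκ) zero_le_three hsupp (hSC ψs) (hmin ψs) hgrad hcone
  exact ⟨h_l2.trans_eq (by ring), h_l1.trans_eq (by ring)⟩
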